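/- Assume the su(2) endomorphism triple setup with Casimir parameter j, where V is a nonzero finite-dimensional complex vector space and j is a real number with j > 0 and 2j ∈ ℤ. Define the ℂ-linear endomorphism M₂ of (Fin 3 → V) × V by M₂(φ, ψ) = ( (T_a(ψ) − Σ_{b,c} ε_{abc} T_b(φ_c))_{a=1,2,3}, −Σ_{a} T_a(φ_a) ). Then the spectrum of M₂ is exactly {j, −(j+1)}. (These are the indicial roots in the (φ_a, a_y) sector; they are the negatives of those in the (a_a, φ_y) sector.) -/

import Mathlib

/-- The Levi-Civita symbol on three indices, with `ε₀₁₂ = 1`. -/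
noncomputable def eps3 (a b c : Fin 3) : ℂ :=
  ((((c.val : ℤ) - (b.val : ℤ)) * ((c.val : ℤ) - (a.val : ℤ)) *
      ((b.val : ℤ) - (a.val : ℤ)) : ℤ) : ℂ) / 2

/-- The indicial operator in the `(φ_a, a_y)` sector:
`M₂(φ, ψ) = ((T_a(ψ) − Σ_{b,c} ε_{abc} T_b(φ_c))_a , −Σ_a T_a(φ_a))`. -/
noncomputable def M2 {V : Type*} [AddCommGroup V] [Module ℂ V]
    (T : Fin 3 → Module.End ℂ V) : Module.End ℂ ((Fin 3 → V) × V) :=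
  LinearMap.prod
    (LinearMap.pi fun a =>
      (T a) ∘ₗ (LinearMap.snd ℂ (Fin 3 → V) V)
        - ∑ b, ∑ c, eps3 a b c •
            ((T b) ∘ₗ (LinearMap.proj c) ∘ₗ (LinearMap.fst ℂ (Fin 3 → V) V)))
    (-(∑ a, (T a) ∘ₗ (LinearMap.proj a) ∘ₗ (LinearMap.fst ℂ (Fin 3 → V) V)))

/-!
Reading `(φ, ψ)` as the quaternion `ψ + φ₀ i + φ₁ j + φ₂ k` with coefficients in `V`, the operator
`M₂` is `∑ₐ Tₐ ⊗ (right multiplication by the a-th imaginary unit)`. Squaring it, the diagonal terms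
give minus the Casimir operator, while the off-diagonal ones only see the commutators `[Tₐ, T_b]`
and reassemble to `-M₂`. Hence `M₂² + M₂ = j (j + 1)`, that is `(M₂ - j) (M₂ + (j + 1)) = 0`, and
both roots occur because `M₂` is not a scalar.
-/

theorem mem_spectrum_of_sub_algebraMap_mul_eq_zero {R A : Type*} [CommRing R] [Ring A]
    [Algebra R A] {a b : A} {r : R} (h : (a - algebraMap R A r) * b = 0) (hb : b ≠ 0) :
    r ∈ spectrum R a := by
  rw [spectrum.mem_iff, IsUnit.sub_iff]
  exact fun hunit => hb (hunit.mul_right_eq_zero.mp h)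

section Spectrum

variable {K A : Type*} [Field K] [Ring A] [Algebra K A] {a : A} {α β : K}

open Polynomial in
theorem spectrum_subset_pair_of_mul_eq_zero
    (h : (a - algebraMap K A α) * (a - algebraMap K A β) = 0) : spectrum K a ⊆ {α, β} := by
  intro μ hμ
  have : Nontrivial A := by
    refine (subsingleton_or_nontrivial A).resolve_left fun _ => ?_
    simp at hμ
  have haeval : aeval a ((X - C α) * (X - C β)) = 0 := by simpa using h
  have heval := spectrum.subset_polynomial_aeval a ((X - C α) * (X - C β)) ⟨μ, hμ, rfl⟩
  simpa [haeval, sub_eq_zero] using heval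

theorem spectrum_eq_pair_of_mul_eq_zero
    (h : (a - algebraMap K A α) * (a - algebraMap K A β) = 0)
    (hα : a ≠ algebraMap K A α) (hβ : a ≠ algebraMap K A β) : spectrum K a = {α, β} := by
  have hcomm : (a - algebraMap K A β) * (a - algebraMap K A α) = 0 := by
    rw [← h]
    exact ((Commute.refl a).sub_left (Algebra.commute_algebraMap_left β a)).sub_right
      (Algebra.commute_algebraMap_right α _)
  refine (spectrum_subset_pair_of_mul_eq_zero h).antisymm (Set.pair_subset ?_ ?_)
  · exact mem_spectrum_of_sub_algebraMap_mul_eq_zero h (sub_ne_zero.mpr hβ)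
  · exact mem_spectrum_of_sub_algebraMap_mul_eq_zero hcomm (sub_ne_zero.mpr hα)

end Spectrum

theorem ne_zero_of_sum_sq_eq_smul_one {K A : Type*} [Field K] [Ring A] [Nontrivial A] [Algebra K A]
    {T : Fin 3 → A} {c : K} (hc : c ≠ 0) (h : T 0 ^ 2 + T 1 ^ 2 + T 2 ^ 2 = c • (1 : A)) :
    T ≠ 0 := by
  rintro rfl
  refine smul_ne_zero hc (one_ne_zero (α := A)) ?_
  simpa only [Pi.zero_apply, zero_pow two_ne_zero, add_zero] using h.symm

/-- Triples satisfying the commutation relations of the standard basis of `su(2)`, in the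
normalisation `[T₀, T₁] = T₂` and cyclically. The zero triple is allowed. -/
structure IsSu2Triple {A : Type*} [NonUnitalNonAssocRing A] (T : Fin 3 → A) : Prop where
  lie_zero_one : ⁅T 0, T 1⁆ = T 2
  lie_one_two : ⁅T 1, T 2⁆ = T 0
  lie_two_zero : ⁅T 2, T 0⁆ = T 1

/-- The operator `∑ₐ Tₐ eₐ` in a ring, for a triple `T` and the imaginary units
`e = (q.i, q.j, q.k)` of a quaternion basis `q`. -/
def quaternionDirac {R A : Type*} [CommRing R] [Ring A] [Algebra R A] {c₁ c₂ c₃ : R}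
    (q : QuaternionAlgebra.Basis A c₁ c₂ c₃) (T : Fin 3 → A) : A :=
  T 0 * q.i + T 1 * q.j + T 2 * q.k

namespace IsSu2Triple

theorem map {F A B : Type*} [NonUnitalNonAssocRing A] [NonUnitalNonAssocRing B] [FunLike F A B]
    [NonUnitalRingHomClass F A B] {T : Fin 3 → A} (hT : IsSu2Triple T) (f : F) :
    IsSu2Triple fun a => f (T a) where
  lie_zero_one := by simp only [← hT.lie_zero_one, Ring.lie_def, map_sub, map_mul]
  lie_one_two := by simp only [← hT.lie_one_two, Ring.lie_def, map_sub, map_mul]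
  lie_two_zero := by simp only [← hT.lie_two_zero, Ring.lie_def, map_sub, map_mul]

theorem quaternionDirac_sq {R A : Type*} [CommRing R] [Ring A] [Algebra R A] {T : Fin 3 → A}
    (hT : IsSu2Triple T) (q : QuaternionAlgebra.Basis A (-1 : R) 0 (-1))
    (hi : ∀ a, Commute q.i (T a)) (hj : ∀ a, Commute q.j (T a)) :
    quaternionDirac q T ^ 2 = quaternionDirac q T - (T 0 ^ 2 + T 1 ^ 2 + T 2 ^ 2) := by
  have hk (a : Fin 3) : Commute q.k (T a) := q.i_mul_j ▸ (hi a).mul_left (hj a)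
  have hexpand : quaternionDirac q T ^ 2 =
      ⁅T 1, T 2⁆ * q.i + ⁅T 2, T 0⁆ * q.j + ⁅T 0, T 1⁆ * q.k
        - (T 0 ^ 2 + T 1 ^ 2 + T 2 ^ 2) := by
    simp only [quaternionDirac, Ring.lie_def, pow_two, add_mul, mul_add, (hi _).mul_mul_mul_comm,
      (hj _).mul_mul_mul_comm, (hk _).mul_mul_mul_comm, q.i_mul_i, q.j_mul_j, q.i_mul_j,
      q.j_mul_i, q.i_mul_k, q.k_mul_i, q.j_mul_k, q.k_mul_j, q.k_mul_k]
    simp only [neg_smul, one_smul, zero_smul, mul_neg, mul_one, neg_neg]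
    noncomm_ring
  rw [hexpand, hT.lie_one_two, hT.lie_two_zero, hT.lie_zero_one, quaternionDirac]

end IsSu2Triple

section Quaternion

variable (R V : Type*) [CommRing R] [AddCommGroup V] [Module R V]

/-- The action of `End V` on `V³ × V` by applying an endomorphism to all four components. -/
def componentwise : Module.End R V →ₐ[R] Module.End R ((Fin 3 → V) × V) where
  toFun f := (f.compLeft (Fin 3)).prodMap f
  map_one' := rfl
  map_mul' _ _ := rfl
  map_zero' := rfl
  map_add' _ _ := rfl
  commutes' _ := rfl

variable {R V} in
theorem componentwise_apply (f : Module.End R V) (x : (Fin 3 → V) × V) :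
    componentwise R V f x = (fun a => f (x.1 a), f x.2) :=
  rfl

variable {R V} in
theorem linearMap_ext_fin_three_prod {M : Type*} [AddCommMonoid M] [Module R M]
    {f g : M →ₗ[R] (Fin 3 → V) × V} (h₀ : ∀ x, (f x).1 0 = (g x).1 0)
    (h₁ : ∀ x, (f x).1 1 = (g x).1 1) (h₂ : ∀ x, (f x).1 2 = (g x).1 2)
    (h : ∀ x, (f x).2 = (g x).2) : f = g := by
  refine LinearMap.ext fun x => Prod.ext (funext fun a => ?_) (h x)
  fin_cases a
  exacts [h₀ x, h₁ x, h₂ x]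

/-- Identifying `(φ, ψ)` with the quaternion `ψ + φ₀ i + φ₁ j + φ₂ k` with coefficients in `V`, the
imaginary units act by right multiplication with their conjugates. The conjugation turns the right
action into an algebra homomorphism. -/
def rightMulConjBasis :
    QuaternionAlgebra.Basis (Module.End R ((Fin 3 → V) × V)) (-1 : R) 0 (-1) :=
  let φ (a : Fin 3) : (Fin 3 → V) × V →ₗ[R] V := LinearMap.proj a ∘ₗ LinearMap.fst R (Fin 3 → V) V
  let ψ : (Fin 3 → V) × V →ₗ[R] V := LinearMap.snd R (Fin 3 → V) V
  { i := (LinearMap.pi ![-ψ, -φ 2, φ 1]).prod (φ 0)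
    j := (LinearMap.pi ![φ 2, -ψ, -φ 0]).prod (φ 1)
    k := (LinearMap.pi ![-φ 1, φ 0, -ψ]).prod (φ 2)
    i_mul_i := by apply linearMap_ext_fin_three_prod <;> simp [φ, ψ]
    j_mul_j := by apply linearMap_ext_fin_three_prod <;> simp [φ, ψ]
    i_mul_j := by apply linearMap_ext_fin_three_prod <;> simp [φ, ψ]
    j_mul_i := by apply linearMap_ext_fin_three_prod <;> simp [φ, ψ] }

variable {R V}

theorem commute_rightMulConjBasis_i (f : Module.End R V) :
    Commute (rightMulConjBasis R V).i (componentwise R V f) := by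
  apply linearMap_ext_fin_three_prod <;> simp [rightMulConjBasis, componentwise_apply]

theorem commute_rightMulConjBasis_j (f : Module.End R V) :
    Commute (rightMulConjBasis R V).j (componentwise R V f) := by
  apply linearMap_ext_fin_three_prod <;> simp [rightMulConjBasis, componentwise_apply]

end Quaternion

section IndicialOperator

theorem sum_eps3_smul {M : Type*} [AddCommGroup M] [Module ℂ M] (F : Fin 3 → Fin 3 → M)
    (a : Fin 3) :
    ∑ b, ∑ c, eps3 a b c • F b c = F (a + 1) (a + 2) - F (a + 2) (a + 1) := by
  fin_cases a <;> simp [eps3, Fin.sum_univ_three] <;> norm_num <;> abel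

variable {V : Type*} [AddCommGroup V] [Module ℂ V] {T : Fin 3 → Module.End ℂ V}

theorem M2_eq_neg_quaternionDirac (T : Fin 3 → Module.End ℂ V) :
    M2 T = -quaternionDirac (rightMulConjBasis ℂ V) fun a => componentwise ℂ V (T a) := by
  simp only [M2, sum_eps3_smul]
  apply linearMap_ext_fin_three_prod <;> intro x <;>
    simp [quaternionDirac, rightMulConjBasis, componentwise_apply, Fin.sum_univ_three] <;>
    abel

theorem IsSu2Triple.M2_sq (hT : IsSu2Triple T) :
    M2 T ^ 2 = -M2 T - componentwise ℂ V (T 0 ^ 2 + T 1 ^ 2 + T 2 ^ 2) := by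
  let T' (a : Fin 3) : Module.End ℂ ((Fin 3 → V) × V) := componentwise ℂ V (T a)
  let D := quaternionDirac (rightMulConjBasis ℂ V) T'
  calc
    M2 T ^ 2 = D ^ 2 := by rw [M2_eq_neg_quaternionDirac]; exact neg_sq D
    _ = D - (T' 0 ^ 2 + T' 1 ^ 2 + T' 2 ^ 2) :=
      (hT.map (componentwise ℂ V)).quaternionDirac_sq (rightMulConjBasis ℂ V)
        (fun a => commute_rightMulConjBasis_i (T a)) (fun a => commute_rightMulConjBasis_j (T a))
    _ = -M2 T - componentwise ℂ V (T 0 ^ 2 + T 1 ^ 2 + T 2 ^ 2) := by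
      simp only [M2_eq_neg_quaternionDirac, neg_neg, map_add, map_pow, D, T']

theorem IsSu2Triple.M2_sub_mul_M2_sub_eq_zero (hT : IsSu2Triple T) {j : ℂ}
    (hcas : T 0 ^ 2 + T 1 ^ 2 + T 2 ^ 2 = -(j * (j + 1)) • (1 : Module.End ℂ V)) :
    (M2 T - algebraMap ℂ _ j) * (M2 T - algebraMap ℂ _ (-(j + 1))) = 0 := by
  have hsq := hT.M2_sq
  rw [hcas, map_smul, map_one, pow_two] at hsq
  simp only [Algebra.algebraMap_eq_smul_one, mul_sub, sub_mul, smul_mul_assoc, mul_smul_comm,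
    one_mul, mul_one, hsq]
  module

theorem M2_ne_algebraMap (hT : T ≠ 0) (c : ℂ) : M2 T ≠ algebraMap ℂ _ c := by
  intro hscalar
  refine hT (funext fun a => LinearMap.ext fun v => ?_)
  have hv := congrFun (congrArg Prod.fst (LinearMap.congr_fun hscalar (0, v))) a
  simpa [M2] using hv

theorem spectrum_M2_general (hT : IsSu2Triple T) (hT0 : T ≠ 0) (j : ℂ)
    (hcas : T 0 ^ 2 + T 1 ^ 2 + T 2 ^ 2 = -(j * (j + 1)) • (1 : Module.End ℂ V)) :
    spectrum ℂ (M2 T) = {j, -(j + 1)} :=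
  spectrum_eq_pair_of_mul_eq_zero (hT.M2_sub_mul_M2_sub_eq_zero hcas) (M2_ne_algebraMap hT0 _)
    (M2_ne_algebraMap hT0 _)

end IndicialOperator

/-- For an su(2) endomorphism triple with Casimir parameter `j > 0` (with `2j ∈ ℤ`) on a
nonzero finite-dimensional complex vector space, the spectrum of the indicial operator `M₂`
in the `(φ_a, a_y)` sector is exactly `{j, −(j+1)}`: the negatives of the indicial roots of
the `(a_a, φ_y)` sector. -/
theorem spectrum_M2 {V : Type*} [AddCommGroup V] [Module ℂ V]
    [FiniteDimensional ℂ V] [Nontrivial V]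
    (T : Fin 3 → Module.End ℂ V)
    (h12 : T 0 * T 1 - T 1 * T 0 = T 2)
    (h23 : T 1 * T 2 - T 2 * T 1 = T 0)
    (h31 : T 2 * T 0 - T 0 * T 2 = T 1)
    (j : ℝ) (hj : 0 < j) (hj2 : ∃ m : ℤ, (m : ℝ) = 2 * j)
    (hcas : T 0 ^ 2 + T 1 ^ 2 + T 2 ^ 2
      = -(((j * (j + 1) : ℝ) : ℂ)) • (1 : Module.End ℂ V)) :
    spectrum ℂ (M2 T) = {(j : ℂ), -((j : ℂ) + 1)} := by
  have hc : -((j * (j + 1) : ℝ) : ℂ) ≠ 0 := by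
    exact_mod_cast neg_ne_zero.mpr (by positivity : j * (j + 1) ≠ 0)
  exact spectrum_M2_general ⟨h12, h23, h31⟩ (ne_zero_of_sum_sq_eq_smul_one hc hcas) j
    (by simpa using hcas)
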